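/- Let λ be a real number with 8/13 < λ < 1. If f is a close-to-convex function on the unit disk with Taylor coefficients a_k, then |λ a_4² − a_7| ≤ (λ(80 − 49λ) + 32(2 − λ)√(λ(2 − λ))) / (λ(32 − 25λ)). -/

import Mathlib

open Complex Metric

/-- The k-th Taylor coefficient of `f` at `0`: `a_k = f^{(k)}(0)/k!`. -/
noncomputable def taylorCoeff (f : ℂ → ℂ) (k : ℕ) : ℂ :=
  iteratedDeriv k f 0 / (Nat.factorial k)

/-- `g` is a (normalized) starlike function on the unit disk. -/
def IsStarlikeFn (g : ℂ → ℂ) : Prop :=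
  DifferentiableOn ℂ g (ball (0 : ℂ) 1) ∧ g 0 = 0 ∧ deriv g 0 = 1 ∧
    ∀ z ∈ ball (0 : ℂ) 1 \ {0}, 0 < (z * deriv g z / g z).re

/-- `f` is a (normalized) close-to-convex function on the unit disk. -/
def IsCloseToConvex (f : ℂ → ℂ) : Prop :=
  DifferentiableOn ℂ f (ball (0 : ℂ) 1) ∧ f 0 = 0 ∧ deriv f 0 = 1 ∧
    ∃ θ : ℝ, ∃ g : ℂ → ℂ, IsStarlikeFn g ∧
      ∀ z ∈ ball (0 : ℂ) 1 \ {0},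
        0 < (Complex.exp (θ * Complex.I) * z * deriv f z / g z).re


/-- Averaging a polynomial over `[0,1]`. -/
lemma avg_poly (N : ℕ) (a : ℕ → ℂ) (M : ℝ)
    (h : ∀ s : ℝ, 0 ≤ s → s ≤ 1 → (∑ k ∈ Finset.range N, a k * (s : ℂ) ^ k).re ≤ M) :
    (∑ k ∈ Finset.range N, a k / ((k : ℂ) + 1)).re ≤ M := by
  have e1 : ∫ s in (0 : ℝ)..1, ∑ k ∈ Finset.range N, (a k).re * s ^ k
      = (∑ k ∈ Finset.range N, a k / ((k : ℂ) + 1)).re := by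
    rw [intervalIntegral.integral_finsetSum]
    · rw [Complex.re_sum]
      refine Finset.sum_congr rfl fun k _ => ?_
      rw [intervalIntegral.integral_const_mul, integral_pow]
      have : ((k : ℂ) + 1) = ((k + 1 : ℝ) : ℂ) := by push_cast; ring
      rw [this, Complex.div_ofReal_re]
      simp [div_eq_mul_inv]
    · intro k _
      apply Continuous.intervalIntegrable
      fun_prop
  have e2 : ∫ s in (0 : ℝ)..1, M = M := by simp
  rw [← e1, ← e2]
  apply intervalIntegral.integral_mono_on (by norm_num)
  · apply Continuous.intervalIntegrable
    fun_prop
  · apply Continuous.intervalIntegrable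
    fun_prop
  · intro s hs
    have := h s hs.1 hs.2
    rw [Complex.re_sum] at this
    convert this using 2 with k
    rw [← Complex.ofReal_pow, Complex.re_mul_ofReal]

/-- Averaging a polynomial over `[0,1]` with weight `2 s`. -/
lemma avg_poly_weighted (N : ℕ) (a : ℕ → ℂ) (M : ℝ)
    (h : ∀ s : ℝ, 0 ≤ s → s ≤ 1 → (∑ k ∈ Finset.range N, a k * (s : ℂ) ^ k).re ≤ M) :
    (∑ k ∈ Finset.range N, 2 * a k / ((k : ℂ) + 2)).re ≤ M := by
  have e1 : ∫ s in (0 : ℝ)..1, ∑ k ∈ Finset.range N, 2 * (a k).re * s ^ (k + 1)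
      = (∑ k ∈ Finset.range N, 2 * a k / ((k : ℂ) + 2)).re := by
    rw [intervalIntegral.integral_finsetSum]
    · rw [Complex.re_sum]
      refine Finset.sum_congr rfl fun k _ => ?_
      rw [intervalIntegral.integral_const_mul, integral_pow]
      have : ((k : ℂ) + 2) = ((k + 2 : ℝ) : ℂ) := by push_cast; ring
      rw [this, Complex.div_ofReal_re]
      simp [div_eq_mul_inv]
      left
      ring
    · intro k _
      apply Continuous.intervalIntegrable
      fun_prop
  have e2 : ∫ s in (0 : ℝ)..1, (2 * M) * s = M := by
    rw [intervalIntegral.integral_const_mul, integral_id]; ring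
  rw [← e1, ← e2]
  apply intervalIntegral.integral_mono_on (by norm_num)
  · apply Continuous.intervalIntegrable
    fun_prop
  · apply Continuous.intervalIntegrable
    fun_prop
  · intro s hs
    have := h s hs.1 hs.2
    rw [Complex.re_sum] at this
    have h2 := mul_le_mul_of_nonneg_left this (mul_nonneg zero_le_two hs.1)
    rw [Finset.mul_sum] at h2
    calc _ ≤ _ := le_of_eq (Finset.sum_congr rfl fun k _ => ?_)
      _ ≤ _ := h2
      _ = _ := by ring
    rw [← Complex.ofReal_pow, Complex.re_mul_ofReal]
    ring

/-- complete homogeneous polynomial in two variables -/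
noncomputable def hom2 (n : ℕ) (a b : ℂ) : ℂ := ∑ j ∈ Finset.range (n + 1), a ^ j * b ^ (n - j)

/-- complete homogeneous polynomial in three variables -/
noncomputable def hom3 (n : ℕ) (a b c : ℂ) : ℂ :=
  ∑ j ∈ Finset.range (n + 1), a ^ j * hom2 (n - j) b c

set_option maxHeartbeats 1600000 in
/-- Feynman parametrisation, in the form needed. -/
lemma feynman (A2 A3 A5 A6 : ℂ) (M : ℝ)
    (h : ∀ v : ℂ, ‖v‖ ≤ 1 →
      (6 * A2 * v ^ 2 + 10 * A3 * v ^ 3 + 21 * A5 * v ^ 5 + 28 * A6 * v ^ 6).re ≤ M)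
    (w y1 y2 : ℂ) (hw : ‖w‖ ≤ 1) (h1 : ‖y1‖ ≤ 1) (h2 : ‖y2‖ ≤ 1) :
    (A2 * hom3 2 w y1 y2 + A3 * hom3 3 w y1 y2 + A5 * hom3 5 w y1 y2
      + A6 * hom3 6 w y1 y2).re ≤ M := by
  set B : ℕ → ℂ := fun n => if n = 2 then 6 * A2 else if n = 3 then 10 * A3 else
    if n = 5 then 21 * A5 else if n = 6 then 28 * A6 else 0 with hB
  have step1 : ∀ u : ℝ, 0 ≤ u → u ≤ 1 →
      (∑ k ∈ Finset.range 7, (∑ n ∈ Finset.range 7, B n * ((n.choose k : ℂ) *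
        ((w + u * (y1 - w)) ^ (n - k) * (u * (y2 - y1)) ^ k))) / ((k : ℂ) + 1)).re ≤ M := by
    intro u hu0 hu1
    apply avg_poly
    intro s hs0 hs1
    have hv : ‖w + u * (y1 - w) + s * (u * (y2 - y1))‖ ≤ 1 := by
      have e : w + u * (y1 - w) + s * (u * (y2 - y1))
        = ((1 - u : ℝ) : ℂ) * w + ((u * (1 - s) : ℝ) : ℂ) * y1 + ((u * s : ℝ) : ℂ) * y2 := by
        push_cast; ring
      rw [e]
      refine (norm_add₃_le).trans ?_
      rw [norm_mul, norm_mul, norm_mul, Complex.norm_real, Complex.norm_real, Complex.norm_real,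
        Real.norm_of_nonneg (by linarith), Real.norm_of_nonneg (mul_nonneg hu0 (by linarith)),
        Real.norm_of_nonneg (mul_nonneg hu0 hs0)]
      have a1 := mul_le_mul_of_nonneg_left hw (by linarith : 0 ≤ 1 - u)
      have a2 := mul_le_mul_of_nonneg_left h1 (mul_nonneg hu0 (by linarith : 0 ≤ 1 - s))
      have a3 := mul_le_mul_of_nonneg_left h2 (mul_nonneg hu0 hs0)
      linarith
    have := h _ hv
    refine le_trans (le_of_eq ?_) this
    congr 1
    generalize w + u * (y1 - w) = P
    generalize (u : ℂ) * (y2 - y1) = Q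
    simp [Finset.sum_range_succ, hB, Nat.choose]
    ring
  have step2 : (∑ m ∈ Finset.range 7, 2 * (∑ k ∈ Finset.range 7, ∑ n ∈ Finset.range 7,
      if k ≤ m then B n * ((n.choose k : ℂ) * ((n - k).choose (m - k) : ℂ)
        * w ^ (n - m) * (y1 - w) ^ (m - k) * (y2 - y1) ^ k) / ((k : ℂ) + 1) else 0)
        / ((m : ℂ) + 2)).re ≤ M := by
    apply avg_poly_weighted
    intro u hu0 hu1
    refine le_trans (le_of_eq ?_) (step1 u hu0 hu1)
    congr 1
    generalize y1 - w = P
    generalize y2 - y1 = Q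
    simp [Finset.sum_range_succ, hB, Nat.choose]
    ring
  refine le_trans (le_of_eq ?_) step2
  congr 1
  simp [Finset.sum_range_succ, hB, Nat.choose, hom3, hom2]
  ring

/-- The final inequality on the extreme points. -/
lemma final_ineq (lam t : ℝ) (ht : 0 < t)
    (hC : 0 < 2 - 3 * lam * t)
    (hdisc : 9 * lam * (t + 1) ^ 2 = 32 - 16 * lam)
    (a b : ℂ) (ha : ‖a‖ ≤ 1) (hb : ‖b‖ ≤ 1) :
    lam * (((5 * a - 3 * b) / 2).re) ^ 2 - (4 * a ^ 2 - 3 * a * b).re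
      ≤ 4 + 3 / 2 * (t + 1 / t) := by
  have ha' : a.re ^ 2 + a.im ^ 2 ≤ 1 := by
    have := Complex.sq_norm a
    rw [Complex.normSq_apply] at this
    nlinarith [norm_nonneg a]
  have hb' : b.re ^ 2 + b.im ^ 2 ≤ 1 := by
    have := Complex.sq_norm b
    rw [Complex.normSq_apply] at this
    nlinarith [norm_nonneg b]
  have e1 : ((5 * a - 3 * b) / 2).re = (5 * a.re - 3 * b.re) / 2 := by
    have : ((5 * a - 3 * b) / 2) = ((5 * a - 3 * b) / ((2 : ℝ) : ℂ)) := by norm_num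
    rw [this, Complex.div_ofReal_re]
    simp
  have e2 : (4 * a ^ 2 - 3 * a * b).re
      = 4 * (a.re ^ 2 - a.im ^ 2) - 3 * (a.re * b.re - a.im * b.im) := by
    simp [pow_two]; ring
  rw [e1, e2]
  generalize a.re = u at *
  generalize a.im = p at *
  generalize b.re = v at *
  generalize b.im = q at *
  have hti : 1 / t * t = 1 := by field_simp
  set T := 1 / t with hT
  have hT0 : 0 < T := by positivity
  clear_value T
  have k1 : -3 * (p * q) ≤ 3 / 2 * (t * p ^ 2 + T * q ^ 2) := by
    have : 0 ≤ T * (t * p + q) ^ 2 := by positivity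
    have e : T * (t * p + q) ^ 2 = (T * t) * t * p ^ 2 + 2 * (T * t) * (p * q) + T * q ^ 2 := by ring
    rw [e, hti] at this
    linarith
  have k2 : t * p ^ 2 ≤ t * (1 - u ^ 2) := by nlinarith
  have k3 : T * q ^ 2 ≤ T * (1 - v ^ 2) := by nlinarith
  have hC' : 0 < 3 / 2 * T - 9 * lam / 4 := by
    have : 3 / 2 * T - 9 * lam / 4 = 3 / 4 * T * (2 - 3 * lam * t) := by
      linear_combination (9 / 4 * lam) * hti
    rw [this]; positivity
  -- the quadratic form is nonpositive
  have key : 0 ≤ (8 + 3 * t / 2 - 25 * lam / 4) * u ^ 2 + (3 / 2 * T - 9 * lam / 4) * v ^ 2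
      + (15 * lam / 2 - 3) * u * v := by
    have hd : (15 * lam / 2 - 3) ^ 2
        = 4 * (8 + 3 * t / 2 - 25 * lam / 4) * (3 / 2 * T - 9 * lam / 4) := by
      linear_combination (3 / 2 * T) * hdisc + (-27 * lam - 27 / 2 * lam * t - 9) * hti
    have : 0 ≤ (4 * (3 / 2 * T - 9 * lam / 4)) * ((8 + 3 * t / 2 - 25 * lam / 4) * u ^ 2
      + (3 / 2 * T - 9 * lam / 4) * v ^ 2 + (15 * lam / 2 - 3) * u * v) := by
      have : (4 * (3 / 2 * T - 9 * lam / 4)) * ((8 + 3 * t / 2 - 25 * lam / 4) * u ^ 2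
      + (3 / 2 * T - 9 * lam / 4) * v ^ 2 + (15 * lam / 2 - 3) * u * v)
        = (2 * (3 / 2 * T - 9 * lam / 4) * v + (15 * lam / 2 - 3) * u) ^ 2 := by
        linear_combination (-u ^ 2) * hd
      rw [this]; positivity
    exact nonneg_of_mul_nonneg_right this (by positivity)
  nlinarith

lemma circleAvg_coeff (q : ℂ → ℂ) (hq : DifferentiableOn ℂ q (ball (0 : ℂ) 1)) (r : ℝ) (hr0 : 0 < r)
    (hr1 : r < 1) (n : ℕ) :
    Real.circleAverage (fun z => ((r : ℂ) / z) ^ n * q z) 0 r = (r : ℂ) ^ n * taylorCoeff q n := by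
  have hc : DifferentiableOn ℂ q (closedBall (0 : ℂ) r) :=
    hq.mono (closedBall_subset_ball hr1)
  have := hc.circleIntegral_one_div_sub_center_pow_smul hr0 n
  rw [Real.circleAverage_eq_circleIntegral hr0.ne']
  have e : (∮ z in C(0, r), (z - 0)⁻¹ • (((r : ℂ) / z) ^ n * q z))
      = (r : ℂ) ^ n * ∮ z in C(0, r), (1 / (z - 0) ^ (n + 1)) • q z := by
    rw [← circleIntegral.integral_const_mul]
    congr 1
    ext z
    simp only [sub_zero, smul_eq_mul, div_pow]
    by_cases hz : z = 0
    · subst hz; simp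
    · field_simp
      ring
  rw [e, this]
  unfold taylorCoeff
  have : (2 * Real.pi * I : ℂ) ≠ 0 := two_pi_I_ne_zero
  simp only [smul_eq_mul]
  field_simp

lemma circleAvg_pos (q : ℂ → ℂ) (hq : DifferentiableOn ℂ q (ball (0 : ℂ) 1)) (r : ℝ) (hr0 : 0 < r)
    (hr1 : r < 1) (n : ℕ) :
    Real.circleAverage (fun z => (z / (r : ℂ)) ^ n * q z) 0 r = (0 : ℂ) ^ n * q 0 := by
  have hc : DifferentiableOn ℂ (fun z => (z / (r : ℂ)) ^ n * q z) (closedBall (0 : ℂ) |r|) := by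
    rw [abs_of_pos hr0]
    exact (by fun_prop : DifferentiableOn ℂ (fun z : ℂ => (z / (r : ℂ)) ^ n) _).mul
      (hq.mono (closedBall_subset_ball hr1))
  have := (hc.mono closure_ball_subset_closedBall).diffContOnCl.circleAverage
  rw [this]; simp

lemma caratheodory_r (q : ℂ → ℂ) (hq : DifferentiableOn ℂ q (ball (0 : ℂ) 1)) (hq0 : q 0 = 1)
    (hre : ∀ z ∈ ball (0 : ℂ) 1, 0 ≤ (q z).re) (r : ℝ) (hr0 : 0 < r) (hr1 : r < 1)
    (N : ℕ) (c : ℕ → ℂ) (M : ℝ)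
    (h : ∀ y : ℂ, ‖y‖ = 1 → (∑ n ∈ Finset.range N, c n * y ^ n).re ≤ M) :
    (∑ n ∈ Finset.range N, c n * ((r : ℂ) ^ n * ((taylorCoeff q n + 0 ^ n) / 2))).re ≤ M := by
  have hcont : ContinuousOn q (sphere (0 : ℂ) |r|) := by
    rw [abs_of_pos hr0]
    exact hq.continuousOn.mono (sphere_subset_closedBall.trans (closedBall_subset_ball hr1))
  have i1 : ∀ n, CircleIntegrable (fun z => ((r : ℂ) / z) ^ n * q z) 0 r := by
    intro n
    refine ContinuousOn.circleIntegrable' (ContinuousOn.mul (ContinuousOn.pow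
      (ContinuousOn.div continuousOn_const continuousOn_id ?_) n) hcont)
    intro x hx
    rw [abs_of_pos hr0] at hx
    exact ne_of_mem_sphere hx hr0.ne'
  have i2 : ∀ n, CircleIntegrable (fun z => (z / (r : ℂ)) ^ n * q z) 0 r := by
    intro n
    refine ContinuousOn.circleIntegrable' (ContinuousOn.mul (by fun_prop) hcont)
  have i0 : CircleIntegrable q 0 r := hcont.circleIntegrable'
  have i1' : ∀ n, CircleIntegrable (fun z => (c n / 2) • (((r : ℂ) / z) ^ n * q z)) 0 r :=
    fun n => (i1 n).const_smul
  have i2' : ∀ n, CircleIntegrable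
      (fun z => ((starRingEnd ℂ) (c n) / 2) • ((z / (r : ℂ)) ^ n * q z)) 0 r :=
    fun n => (i2 n).const_smul
  have i0' : CircleIntegrable (fun z => (M : ℂ) • q z) 0 r := i0.const_smul
  set F : ℂ → ℂ := fun z => (M : ℂ) • q z
    - ∑ n ∈ Finset.range N, ((c n / 2) • (((r : ℂ) / z) ^ n * q z)
        + ((starRingEnd ℂ) (c n) / 2) • ((z / (r : ℂ)) ^ n * q z)) with hF
  have is : CircleIntegrable (fun z => ∑ n ∈ Finset.range N, ((c n / 2) • (((r : ℂ) / z) ^ n * q z)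
        + ((starRingEnd ℂ) (c n) / 2) • ((z / (r : ℂ)) ^ n * q z))) 0 r := by
    apply CircleIntegrable.fun_sum
    intro n _
    exact (i1' n).add (i2' n)
  have iF : CircleIntegrable F 0 r := i0'.sub is
  have a0 : Real.circleAverage q 0 r = 1 := by
    have := circleAvg_pos q hq r hr0 hr1 0
    simpa [hq0] using this
  have avg : Real.circleAverage F 0 r = (M : ℂ) - ∑ n ∈ Finset.range N,
      (c n / 2 * ((r : ℂ) ^ n * taylorCoeff q n) + (starRingEnd ℂ) (c n) / 2 * 0 ^ n) := by
    rw [hF, Real.circleAverage_fun_sub i0' is, Real.circleAverage_fun_smul, a0,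
      Real.circleAverage_fun_sum (f := fun n z => (c n / 2) • (((r : ℂ) / z) ^ n * q z)
        + ((starRingEnd ℂ) (c n) / 2) • ((z / (r : ℂ)) ^ n * q z))
        (fun n _ => (i1' n).add (i2' n))]
    congr 1
    · simp
    · refine Finset.sum_congr rfl fun n _ => ?_
      rw [Real.circleAverage_fun_add (i1' n) (i2' n), Real.circleAverage_fun_smul,
        Real.circleAverage_fun_smul, circleAvg_coeff q hq r hr0 hr1, circleAvg_pos q hq r hr0 hr1,
        hq0]
      simp
  have reavg : Real.circleAverage (fun z => (F z).re) 0 r = (Real.circleAverage F 0 r).re :=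
    Complex.reCLM.circleAverage_comp_comm iF
  have nonneg : 0 ≤ Real.circleAverage (fun z => (F z).re) 0 r := by
    apply Real.circleAverage_nonneg_of_nonneg
    intro z hz
    rw [abs_of_pos hr0] at hz
    have hz0 : z ≠ 0 := ne_of_mem_sphere hz hr0.ne'
    have hzn : ‖z‖ = r := by simpa using hz
    have hzb : z ∈ ball (0 : ℂ) 1 := by simpa [hzn] using hr1
    have hy : ‖(r : ℂ) / z‖ = 1 := by
      rw [norm_div, hzn, Complex.norm_real, Real.norm_of_nonneg hr0.le]
      field_simp
    have hconj : z / (r : ℂ) = (starRingEnd ℂ) ((r : ℂ) / z) := by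
      have h1 : ((r : ℂ) / z) * (starRingEnd ℂ) ((r : ℂ) / z) = 1 := by
        rw [Complex.mul_conj, Complex.normSq_eq_norm_sq, hy]; simp
      have h2 : ((r : ℂ) / z) * (z / r) = 1 := by
        have : (r : ℂ) ≠ 0 := by exact_mod_cast hr0.ne'
        field_simp
      have h3 : ((r : ℂ) / z) ≠ 0 := by
        intro h0; rw [h0] at h2; simp at h2
      exact mul_left_cancel₀ h3 (h2.trans h1.symm)
    have e : F z = ((M - (∑ n ∈ Finset.range N, c n * ((r : ℂ) / z) ^ n).re : ℝ) : ℂ) * q z := by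
      rw [hF]
      simp only [smul_eq_mul]
      rw [hconj]
      generalize (r : ℂ) / z = y
      have : (((∑ n ∈ Finset.range N, c n * y ^ n).re : ℝ) : ℂ)
          = ∑ n ∈ Finset.range N, (c n / 2 * y ^ n
            + (starRingEnd ℂ) (c n) / 2 * (starRingEnd ℂ) y ^ n) := by
        rw [Complex.re_eq_add_conj, map_sum, ← Finset.sum_add_distrib, Finset.sum_div]
        refine Finset.sum_congr rfl fun n _ => ?_
        rw [map_mul, map_pow]; ring
      push_cast
      rw [this, sub_mul, Finset.sum_mul]
      congr 1
      refine Finset.sum_congr rfl fun n _ => ?_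
      ring
    rw [e, Complex.re_ofReal_mul]
    exact mul_nonneg (by linarith [h _ hy]) (hre z hzb)
  rw [reavg, avg, Complex.sub_re, Complex.ofReal_re] at nonneg
  have fin : (∑ n ∈ Finset.range N, c n * ((r : ℂ) ^ n * ((taylorCoeff q n + 0 ^ n) / 2))).re
    = (∑ n ∈ Finset.range N,
      (c n / 2 * ((r : ℂ) ^ n * taylorCoeff q n) + (starRingEnd ℂ) (c n) / 2 * 0 ^ n)).re := by
    rw [Complex.re_sum, Complex.re_sum]
    refine Finset.sum_congr rfl fun n _ => ?_
    rcases n with _ | n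
    · have : c 0 * ((r : ℂ) ^ 0 * ((taylorCoeff q 0 + 0 ^ 0) / 2))
        = c 0 / 2 * ((r : ℂ) ^ 0 * taylorCoeff q 0) + c 0 / 2 := by simp; ring
      rw [this]
      simp
    · congr 1
      simp only [ne_eq, Nat.add_eq_zero_iff, one_ne_zero, and_false, not_false_eq_true, zero_pow]
      ring
  linarith

/-- Linear functionals on Carathéodory functions. -/
lemma caratheodory (q : ℂ → ℂ) (hq : DifferentiableOn ℂ q (ball (0 : ℂ) 1)) (hq0 : q 0 = 1)
    (hre : ∀ z ∈ ball (0 : ℂ) 1, 0 ≤ (q z).re)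
    (N : ℕ) (c : ℕ → ℂ) (M : ℝ)
    (h : ∀ y : ℂ, ‖y‖ = 1 → (∑ n ∈ Finset.range N, c n * y ^ n).re ≤ M) :
    (∑ n ∈ Finset.range N, c n * ((taylorCoeff q n + 0 ^ n) / 2)).re ≤ M := by
  have hcont : Continuous (fun r : ℝ =>
      (∑ n ∈ Finset.range N, c n * ((r : ℂ) ^ n * ((taylorCoeff q n + 0 ^ n) / 2))).re) := by
    fun_prop
  have ht := (hcont.tendsto 1).mono_left (nhdsWithin_le_nhds (s := Set.Iio 1))
  simp only [Complex.ofReal_one, one_pow, one_mul] at ht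
  refine le_of_tendsto ht ?_
  filter_upwards [Ioo_mem_nhdsLT (zero_lt_one' ℝ)] with r hr
  exact caratheodory_r q hq hq0 hre r hr.1 hr.2 N c M h

/-- Sequences in the closed convex hull of `(1, y, y², …)`, `|y| = 1`, up to index `6`. -/
def HullSeq (K : ℕ → ℂ) : Prop :=
  K 0 = 1 ∧ ∀ (c : ℕ → ℂ) (M : ℝ),
    (∀ y : ℂ, ‖y‖ = 1 → (∑ n ∈ Finset.range 7, c n * y ^ n).re ≤ M) →
    (∑ n ∈ Finset.range 7, c n * K n).re ≤ M

lemma contDiffAt_of_diffOn (h : ℂ → ℂ) (hh : DifferentiableOn ℂ h (ball (0 : ℂ) 1)) (n : WithTop ℕ∞) :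
    ContDiffAt ℂ n h 0 :=
  (hh.analyticAt (ball_mem_nhds 0 one_pos)).contDiffAt

lemma taylorCoeff_affine (h : ℂ → ℂ) (a b : ℂ) (n : ℕ)
    (hn : n ≠ 0) : taylorCoeff (fun z => a * h z + b) n = a * taylorCoeff h n := by
  obtain ⟨m, rfl⟩ := Nat.exists_eq_succ_of_ne_zero hn
  unfold taylorCoeff
  rw [iteratedDeriv_succ', iteratedDeriv_succ']
  have : deriv (fun z => a * h z + b) = fun z => a * deriv h z := by
    ext z
    rw [deriv_add_const, deriv_const_mul_field]
  rw [this, iteratedDeriv_const_mul_field]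
  ring

lemma hullSeq_of_half (k : ℂ → ℂ) (hk : DifferentiableOn ℂ k (ball (0 : ℂ) 1)) (hk0 : k 0 = 1)
    (hre : ∀ z ∈ ball (0 : ℂ) 1, 1 / 2 ≤ (k z).re) : HullSeq (taylorCoeff k) := by
  have h0 : taylorCoeff k 0 = 1 := by simp [taylorCoeff, hk0]
  refine ⟨h0, fun c M h => ?_⟩
  have := caratheodory (fun z => 2 * k z + (-1)) ((hk.const_mul 2).add_const _)
    (by simp [hk0]; norm_num) (by
      intro z hz
      have := hre z hz
      simp
      linarith) 7 c M h
  refine le_trans (le_of_eq ?_) this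
  congr 1
  refine Finset.sum_congr rfl fun n _ => ?_
  rcases n with _ | n
  · rw [h0]
    have : taylorCoeff (fun z => 2 * k z + (-1)) 0 = 1 := by simp [taylorCoeff, hk0]; norm_num
    rw [this]; norm_num
  · rw [taylorCoeff_affine k _ _ _ (Nat.succ_ne_zero n)]
    simp

/-- The Jack lemma, applied to the Marx–Strohhäcker differential subordination. -/
lemma jack_bound (om : ℂ → ℂ) (hd : DifferentiableOn ℂ om (ball (0 : ℂ) 1)) (h0 : om 0 = 0)
    (hne : ∀ z ∈ ball (0 : ℂ) 1, om z ≠ 1)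
    (hpos : ∀ z ∈ ball (0 : ℂ) 1, 0 < (1 + 2 * (z * deriv om z / (1 - om z))).re) :
    ∀ z ∈ ball (0 : ℂ) 1, ‖om z‖ < 1 := by
  by_contra! hcon
  obtain ⟨z1, hz1, hz1'⟩ := hcon
  have hz1n : ‖z1‖ < 1 := by simpa using hz1
  have hsub : closedBall (0 : ℂ) ‖z1‖ ⊆ ball 0 1 := closedBall_subset_ball hz1n
  have hcS : IsCompact (closedBall (0 : ℂ) ‖z1‖ ∩ (fun z => ‖om z‖) ⁻¹' Set.Ici 1) := by
    refine (isCompact_closedBall (0 : ℂ) ‖z1‖).of_isClosed_subset ?_ Set.inter_subset_left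
    exact ((hd.continuousOn.mono hsub).norm).preimage_isClosed_of_isClosed isClosed_closedBall
      isClosed_Ici
  obtain ⟨z0, hz0S, hmin⟩ := hcS.exists_isMinOn ⟨z1, by simp, hz1'⟩ continuous_norm.continuousOn
  have hz0b : z0 ∈ ball (0 : ℂ) 1 := hsub hz0S.1
  have hz0ge : 1 ≤ ‖om z0‖ := hz0S.2
  have hz0ne : z0 ≠ 0 := by
    rintro rfl
    rw [h0] at hz0ge
    norm_num at hz0ge
  set R := ‖z0‖ with hR
  have hRpos : 0 < R := norm_pos_iff.mpr hz0ne
  have hR1 : R < 1 := by simpa using hz0b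
  have hlt : ∀ z : ℂ, ‖z‖ < R → ‖om z‖ < 1 := by
    intro z hz
    by_contra! hge
    have hz0le : R ≤ ‖z1‖ := by simpa using hz0S.1
    have : R ≤ ‖z‖ := hmin ⟨by simpa using (hz.le.trans hz0le), hge⟩
    linarith
  have hsch : ∀ z : ℂ, ‖z‖ < R → ‖om z‖ ≤ ‖z‖ / R := by
    intro z hz
    have := Complex.dist_le_div_mul_dist_of_mapsTo_ball (f := om) (c := 0) (z := z) (R₁ := R)
      (R₂ := 1) (hd.mono (ball_subset_ball hR1.le)) (by
        intro w hw
        rw [h0]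
        have := hlt w (by simpa using hw)
        simpa using this.le) (by simpa using hz)
    rw [h0] at this
    simp only [dist_zero_right] at this
    linarith [this, (by ring : 1 / R * ‖z‖ = ‖z‖ / R)]
  have hsch' : ∀ z : ℂ, ‖z‖ ≤ R → ‖om z‖ ≤ ‖z‖ / R := by
    intro z hz
    have hzb : z ∈ ball (0 : ℂ) 1 := by simpa using lt_of_le_of_lt hz hR1
    have hc : ContinuousAt om z := (hd.continuousOn).continuousAt (isOpen_ball.mem_nhds hzb)
    have hc1 : Filter.Tendsto (fun s : ℝ => ‖om ((s : ℂ) * z)‖) (nhdsWithin 1 (Set.Iio 1))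
        (nhds ‖om z‖) := by
      have hca : ContinuousAt (fun s : ℝ => ‖om ((s : ℂ) * z)‖) 1 := by
        apply ContinuousAt.norm
        apply ContinuousAt.comp (g := om) (f := fun s : ℝ => (s : ℂ) * z)
        · simpa using hc
        · fun_prop
      have := hca.tendsto.mono_left (nhdsWithin_le_nhds (s := Set.Iio 1))
      simpa using this
    refine le_of_tendsto hc1 ?_
    filter_upwards [Ioo_mem_nhdsLT (zero_lt_one' ℝ)] with s hs
    by_cases hzz : z = 0
    · subst hzz; simp [h0]
    have hzp : 0 < ‖z‖ := norm_pos_iff.mpr hzz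
    have hn : ‖(s : ℂ) * z‖ = s * ‖z‖ := by
      rw [norm_mul, Complex.norm_real, Real.norm_of_nonneg hs.1.le]
    have hlt' : s * ‖z‖ < ‖z‖ := by nlinarith [hs.2]
    have := hsch ((s : ℂ) * z) (by rw [hn]; linarith)
    rw [hn] at this
    exact this.trans (by gcongr)
  have hone : ‖om z0‖ = 1 := by
    refine le_antisymm ?_ hz0ge
    have := hsch' z0 le_rfl
    rwa [← hR, div_self hRpos.ne'] at this
  have hder : HasDerivAt om (deriv om z0) z0 :=
    (hd.differentiableAt (isOpen_ball.mem_nhds hz0b)).hasDerivAt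
  set w0 := om z0 with hw0
  have hcc : (starRingEnd ℂ) w0 * w0 = 1 := by
    rw [mul_comm, Complex.mul_conj, Complex.normSq_eq_norm_sq, hone]; simp
  set m : ℂ := (starRingEnd ℂ) w0 * (z0 * deriv om z0) with hm
  have hreb : ∀ z : ℂ, ‖z‖ ≤ R → ((starRingEnd ℂ) w0 * om z).re ≤ ‖z‖ / R := by
    intro z hz
    refine (Complex.re_le_norm _).trans ?_
    rw [norm_mul, Complex.norm_conj, hone, one_mul]
    exact hsch' z hz
  -- tangential derivative
  have him : m.im = 0 := by
    have hc1 : HasDerivAt (fun s : ℝ => z0 * Complex.exp ((s : ℂ) * I)) (z0 * I) 0 := by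
      have h1 : HasDerivAt (fun s : ℝ => (s : ℂ) * I) (1 * I) 0 :=
        (HasDerivAt.ofReal_comp (hasDerivAt_id (0 : ℝ))).mul_const I
      have h2 := (h1.cexp).const_mul z0
      simpa using h2
    have hc2 : HasDerivAt (fun s : ℝ => (starRingEnd ℂ) w0 * om (z0 * Complex.exp ((s : ℂ) * I)))
        ((starRingEnd ℂ) w0 * (deriv om z0 * (z0 * I))) 0 := by
      apply HasDerivAt.const_mul
      apply HasDerivAt.comp (h₂ := om) (h := fun s : ℝ => z0 * Complex.exp ((s : ℂ) * I))
      · simpa using hder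
      · exact hc1
    have hc3 : HasDerivAt
        (fun s : ℝ => ((starRingEnd ℂ) w0 * om (z0 * Complex.exp ((s : ℂ) * I))).re)
        ((starRingEnd ℂ) w0 * (deriv om z0 * (z0 * I))).re 0 :=
      Complex.reCLM.hasFDerivAt.comp_hasDerivAt 0 hc2
    have hmax : IsLocalMax
        (fun s : ℝ => ((starRingEnd ℂ) w0 * om (z0 * Complex.exp ((s : ℂ) * I))).re) 0 := by
      refine Filter.Eventually.of_forall fun s => ?_
      have hn : ‖z0 * Complex.exp ((s : ℂ) * I)‖ = R := by
        rw [norm_mul, Complex.norm_exp_ofReal_mul_I, mul_one]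
      have := hreb _ hn.le
      rw [hn, div_self hRpos.ne'] at this
      simpa [← hw0, hcc] using this
    have hz := hmax.hasDerivAt_eq_zero hc3
    have : (starRingEnd ℂ) w0 * (deriv om z0 * (z0 * I)) = m * I := by rw [hm]; ring
    rw [this] at hz
    simpa using hz
  -- radial derivative
  have hrm : 1 ≤ m.re := by
    have hc1 : HasDerivAt (fun s : ℝ => z0 * (1 - (s : ℂ))) (z0 * (-1)) 0 := by
      have h1 : HasDerivAt (fun s : ℝ => (1 : ℂ) - (s : ℂ)) (-1) 0 :=
        (HasDerivAt.ofReal_comp (hasDerivAt_id (0 : ℝ))).const_sub 1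
      exact h1.const_mul z0
    have hc2 : HasDerivAt (fun s : ℝ => (starRingEnd ℂ) w0 * om (z0 * (1 - (s : ℂ))))
        ((starRingEnd ℂ) w0 * (deriv om z0 * (z0 * (-1)))) 0 := by
      apply HasDerivAt.const_mul
      apply HasDerivAt.comp (h₂ := om) (h := fun s : ℝ => z0 * (1 - (s : ℂ)))
      · simpa using hder
      · exact hc1
    have hc3 : HasDerivAt (fun s : ℝ => ((starRingEnd ℂ) w0 * om (z0 * (1 - (s : ℂ)))).re)
        ((starRingEnd ℂ) w0 * (deriv om z0 * (z0 * (-1)))).re 0 :=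
      Complex.reCLM.hasFDerivAt.comp_hasDerivAt 0 hc2
    have ht := (hasDerivWithinAt_iff_tendsto_slope' (s := Set.Ioi (0 : ℝ)) (by simp)).1
      hc3.hasDerivWithinAt
    have hle : ((starRingEnd ℂ) w0 * (deriv om z0 * (z0 * (-1)))).re ≤ -1 := by
      refine le_of_tendsto ht ?_
      filter_upwards [Ioo_mem_nhdsGT (zero_lt_one' ℝ)] with s hs
      have hn : ‖z0 * (1 - (s : ℂ))‖ = R * (1 - s) := by
        rw [norm_mul, ← Complex.ofReal_one, ← Complex.ofReal_sub, Complex.norm_real,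
          Real.norm_of_nonneg (by linarith [hs.2])]
      have := hreb (z0 * (1 - (s : ℂ))) (by rw [hn]; nlinarith [hs.1])
      rw [hn, mul_div_cancel_left₀ _ hRpos.ne'] at this
      rw [slope_def_field, div_le_iff₀ (by linarith [hs.1])]
      simp only [Complex.ofReal_zero, sub_zero, mul_one, ← hw0, hcc, Complex.one_re]
      linarith
    have : (starRingEnd ℂ) w0 * (deriv om z0 * (z0 * (-1))) = -m := by rw [hm]; ring
    rw [this, Complex.neg_re] at hle
    linarith
  have hmr : m = (m.re : ℂ) := by
    apply Complex.ext <;> simp [him]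
  have hzd : z0 * deriv om z0 = (m.re : ℂ) * w0 := by
    rw [← hmr, hm]
    linear_combination (-(z0 * deriv om z0)) * hcc
  have hfin := hpos z0 hz0b
  rw [← hw0, hzd] at hfin
  have hw1 : w0 ≠ 1 := hne z0 hz0b
  have hxy : w0.re * w0.re + w0.im * w0.im = 1 := by
    rw [← Complex.normSq_apply, Complex.normSq_eq_norm_sq, hone]; norm_num
  have hhalf : (w0 / (1 - w0)).re = -1 / 2 := by
    have hx : 1 - w0.re ≠ 0 := by
      intro hx
      apply hw1
      have hx1 : w0.re = 1 := by linarith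
      rw [hx1] at hxy
      have : w0.im = 0 := by nlinarith
      apply Complex.ext <;> simp [hx1, this]
    have hns : Complex.normSq (1 - w0) = 2 * (1 - w0.re) := by
      rw [Complex.normSq_apply]
      simp
      linear_combination hxy
    rw [Complex.div_re, hns]
    simp
    field_simp
    linear_combination (-1) * hxy
  have : (1 + 2 * ((m.re : ℂ) * w0 / (1 - w0))).re = 1 + 2 * (m.re * (w0 / (1 - w0)).re) := by
    rw [mul_div_assoc, Complex.add_re, Complex.one_re]
    congr 1
    rw [show (2 : ℂ) = ((2 : ℝ) : ℂ) by norm_num, Complex.re_ofReal_mul, Complex.re_ofReal_mul]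
  rw [this, hhalf] at hfin
  linarith

/-- Marx–Strohhäcker: square roots of starlike functions. -/
lemma starlike_sqrt (g : ℂ → ℂ) (hg : IsStarlikeFn g) :
    ∃ h : ℂ → ℂ, DifferentiableOn ℂ h (ball (0 : ℂ) 1) ∧ h 0 = 1 ∧
      (∀ z ∈ ball (0 : ℂ) 1, 1 / 2 ≤ (h z).re) ∧ (∀ z ∈ ball (0 : ℂ) 1, h z ≠ 0) ∧
      ∀ z ∈ ball (0 : ℂ) 1, g z = z * (h z * h z) := by
  obtain ⟨hgd, hg0, hg1, hgpos⟩ := hg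
  set G := dslope g 0 with hG
  have hGd : DifferentiableOn ℂ G (ball (0 : ℂ) 1) :=
    (Complex.differentiableOn_dslope (ball_mem_nhds 0 one_pos)).2 hgd
  have hG0 : G 0 = 1 := by rw [hG, dslope_same, hg1]
  have hgG : ∀ z, g z = z * G z := by
    intro z
    have := sub_smul_dslope g 0 z
    rw [hg0] at this
    simpa using this.symm
  have hGne : ∀ z ∈ ball (0 : ℂ) 1, G z ≠ 0 := by
    intro z hz h
    by_cases hz0 : z = 0
    · subst hz0; rw [hG0] at h; exact one_ne_zero h
    · have := hgpos z ⟨hz, hz0⟩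
      rw [hgG z, h] at this
      simp at this
  have hQd : DifferentiableOn ℂ (fun z => deriv G z / G z) (ball (0 : ℂ) 1) :=
    (hGd.deriv isOpen_ball).div hGd hGne
  obtain ⟨L, hL0, hL⟩ := (hQd.isExactOn_ball).with_val_at 0 0
  have hGL : ∀ z ∈ ball (0 : ℂ) 1, G z = Complex.exp (L z) := by
    intro z hz
    have hder : ∀ x ∈ ball (0 : ℂ) 1, HasDerivAt (fun z => G z * Complex.exp (-L z)) 0 x := by
      intro x hx
      have h1 := (hGd.differentiableAt (isOpen_ball.mem_nhds hx)).hasDerivAt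
      have h2 := h1.mul ((hL x hx).neg.cexp)
      refine h2.congr_deriv ?_
      have := hGne x hx
      simp
      field_simp
      ring
    have := (convex_ball (0 : ℂ) 1).is_const_of_fderivWithin_eq_zero (𝕜 := ℂ)
      (f := fun z => G z * Complex.exp (-L z))
      (fun x hx => (hder x hx).differentiableAt.differentiableWithinAt)
      (fun x hx => by
        rw [fderivWithin_of_isOpen isOpen_ball hx, (hder x hx).hasFDerivAt.fderiv]
        ext; simp) hz (mem_ball_self one_pos)
    simp only [hG0, hL0, neg_zero, Complex.exp_zero, mul_one] at this
    rw [Complex.exp_neg] at this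
    have he := Complex.exp_ne_zero (L z)
    field_simp at this
    exact this
  have homd : ∀ z ∈ ball (0 : ℂ) 1, HasDerivAt (fun z => 1 - Complex.exp (-(L z / 2)))
      (Complex.exp (-(L z / 2)) * (deriv G z / G z / 2)) z := by
    intro z hz
    have := (((hL z hz).div_const 2).fun_neg.cexp).const_sub 1
    refine this.congr_deriv ?_
    ring
  have hj := jack_bound (fun z => 1 - Complex.exp (-(L z / 2)))
    (fun z hz => (homd z hz).differentiableAt.differentiableWithinAt) (by simp [hL0])
    (by
      intro z hz h
      have := Complex.exp_ne_zero (-(L z / 2))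
      apply this
      linear_combination -h)
    (by
      intro z hz
      rw [(homd z hz).deriv]
      have e : 1 + 2 * (z * (Complex.exp (-(L z / 2)) * (deriv G z / G z / 2))
          / (1 - (1 - Complex.exp (-(L z / 2))))) = 1 + z * (deriv G z / G z) := by
        have := Complex.exp_ne_zero (-(L z / 2))
        rw [sub_sub_cancel]
        congr 1
        generalize Complex.exp (-(L z / 2)) = E at *
        generalize deriv G z / G z = Q
        field_simp
      rw [e]
      by_cases hz0 : z = 0
      · subst hz0; simp
      · have hp := hgpos z ⟨hz, hz0⟩
        have hgder : deriv g z = G z + z * deriv G z := by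
          have h1 := (hGd.differentiableAt (isOpen_ball.mem_nhds hz)).hasDerivAt
          have h2 := (hasDerivAt_id z).fun_mul h1
          have h3 : g = fun y => id y * G y := by ext y; exact hgG y
          rw [h3, h2.deriv]; simp
        have e2 : z * deriv g z / g z = 1 + z * (deriv G z / G z) := by
          have := hGne z hz
          rw [hgder, hgG z]
          field_simp
        rwa [e2] at hp)
  refine ⟨fun z => Complex.exp (L z / 2), ?_, by simp [hL0], ?_, fun z _ => Complex.exp_ne_zero _, ?_⟩
  · intro z hz
    exact ((hL z hz).div_const 2).cexp.differentiableAt.differentiableWithinAt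
  · intro z hz
    have := hj z hz
    have hinv : Complex.exp (L z / 2) = (Complex.exp (-(L z / 2)))⁻¹ := by
      rw [Complex.exp_neg, inv_inv]
    have hE := Complex.exp_ne_zero (-(L z / 2))
    show 1 / 2 ≤ (Complex.exp (L z / 2)).re
    rw [hinv]
    generalize Complex.exp (-(L z / 2)) = E at *
    have hn : 0 < Complex.normSq E := Complex.normSq_pos.2 hE
    rw [Complex.inv_re, le_div_iff₀ hn]
    have h2 : ‖1 - E‖ ^ 2 < 1 := by nlinarith [norm_nonneg (1 - E)]
    rw [← Complex.normSq_eq_norm_sq, Complex.normSq_apply] at h2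
    rw [Complex.normSq_apply]
    simp at h2
    nlinarith
  · intro z hz
    rw [hgG z, hGL z hz, ← Complex.exp_add]
    congr 2
    ring

/-- Cauchy product of two sequences. -/
noncomputable def conv (U V : ℕ → ℂ) (n : ℕ) : ℂ := ∑ i ∈ Finset.range (n + 1), U i * V (n - i)

lemma taylorCoeff_mul (u v : ℂ → ℂ) (hu : DifferentiableOn ℂ u (ball (0 : ℂ) 1))
    (hv : DifferentiableOn ℂ v (ball (0 : ℂ) 1)) :
    taylorCoeff (fun z => u z * v z) = conv (taylorCoeff u) (taylorCoeff v) := by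
  funext n
  unfold conv taylorCoeff
  rw [iteratedDeriv_fun_mul (contDiffAt_of_diffOn u hu n) (contDiffAt_of_diffOn v hv n),
    Finset.sum_div]
  refine Finset.sum_congr rfl fun i hi => ?_
  have hin : i ≤ n := by simpa [Nat.lt_succ_iff] using hi
  have h1 : ((n.choose i : ℕ) : ℂ) * (Nat.factorial i : ℂ) * (Nat.factorial (n - i) : ℂ)
      = (Nat.factorial n : ℂ) := by exact_mod_cast Nat.choose_mul_factorial_mul_factorial hin
  have h2 : (Nat.factorial i : ℂ) ≠ 0 := by exact_mod_cast Nat.factorial_ne_zero i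
  have h3 : (Nat.factorial (n - i) : ℂ) ≠ 0 := by exact_mod_cast Nat.factorial_ne_zero (n - i)
  have h4 : (Nat.factorial n : ℂ) ≠ 0 := by exact_mod_cast Nat.factorial_ne_zero n
  field_simp
  rw [← h1]
  ring

lemma taylorCoeff_deriv (f : ℂ → ℂ) (n : ℕ) :
    taylorCoeff (deriv f) n = (n + 1) * taylorCoeff f (n + 1) := by
  unfold taylorCoeff
  rw [iteratedDeriv_succ', Nat.factorial_succ]
  have h4 : (Nat.factorial n : ℂ) ≠ 0 := by exact_mod_cast Nat.factorial_ne_zero n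
  have h5 : ((n : ℂ) + 1) ≠ 0 := by exact_mod_cast Nat.succ_ne_zero n
  push_cast
  field_simp

lemma conv_hull (U H : ℕ → ℂ) (A3 A6 : ℂ) (M : ℝ) (hH : HullSeq H)
    (h : ∀ y : ℂ, ‖y‖ = 1 →
      (A3 * conv U (fun n => y ^ n) 3 + A6 * conv U (fun n => y ^ n) 6).re ≤ M) :
    (A3 * conv U H 3 + A6 * conv U H 6).re ≤ M := by
  have := hH.2 (fun i => (if i ≤ 3 then A3 * U (3 - i) else 0) + A6 * U (6 - i)) M (by
    intro y hy
    convert h y hy using 2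
    simp [conv, Finset.sum_range_succ]
    ring)
  convert this using 2
  simp [conv, Finset.sum_range_succ]
  ring

/-- coefficients of `(1 + c) k - c` -/
noncomputable def epsSeq (c : ℂ) (K : ℕ → ℂ) (n : ℕ) : ℂ := if n = 0 then 1 else (1 + c) * K n

lemma epsSeq_hull (D K : ℕ → ℂ) (c A3 A6 : ℂ) (M : ℝ) (hK : HullSeq K)
    (h : ∀ y : ℂ, ‖y‖ = 1 →
      (A3 * conv (epsSeq c (fun n => y ^ n)) D 3
        + A6 * conv (epsSeq c (fun n => y ^ n)) D 6).re ≤ M) :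
    (A3 * conv (epsSeq c K) D 3 + A6 * conv (epsSeq c K) D 6).re ≤ M := by
  have := hK.2 (fun i => (if i = 0 then 1 else 1 + c)
      * ((if i ≤ 3 then A3 * D (3 - i) else 0) + A6 * D (6 - i))) M (by
    intro y hy
    convert h y hy using 2
    simp [conv, epsSeq, Finset.sum_range_succ]
    ring)
  convert this using 2
  simp [conv, epsSeq, Finset.sum_range_succ, hK.1]
  ring

lemma conv_assoc_comm (U V W : ℕ → ℂ) (n : ℕ) (hn : n = 3 ∨ n = 6) :
    conv (conv U V) W n = conv (conv U W) V n := by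
  rcases hn with rfl | rfl <;> simp [conv, Finset.sum_range_succ] <;> ring

lemma conv_assoc' (U V W : ℕ → ℂ) (n : ℕ) (hn : n = 3 ∨ n = 6) :
    conv (conv U V) W n = conv U (conv V W) n := by
  rcases hn with rfl | rfl <;> simp [conv, Finset.sum_range_succ] <;> ring

lemma trilinear (K H : ℕ → ℂ) (c A3 A6 : ℂ) (M : ℝ) (hK : HullSeq K) (hH : HullSeq H)
    (h : ∀ w y1 y2 : ℂ, ‖w‖ = 1 → ‖y1‖ = 1 → ‖y2‖ = 1 →
      (A3 * (c * w) * hom3 2 w y1 y2 + A3 * hom3 3 w y1 y2 + A6 * (c * w) * hom3 5 w y1 y2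
        + A6 * hom3 6 w y1 y2).re ≤ M) :
    (A3 * conv (conv (epsSeq c K) H) H 3 + A6 * conv (conv (epsSeq c K) H) H 6).re ≤ M := by
  apply conv_hull _ _ _ _ _ hH
  intro y2 hy2
  rw [conv_assoc_comm _ _ _ 3 (by simp), conv_assoc_comm _ _ _ 6 (by simp)]
  apply conv_hull _ _ _ _ _ hH
  intro y1 hy1
  rw [conv_assoc' _ _ _ 3 (by simp), conv_assoc' _ _ _ 6 (by simp)]
  apply epsSeq_hull _ _ _ _ _ _ hK
  intro w hw
  convert h w y1 y2 hw hy1 hy2 using 2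
  simp [conv, epsSeq, Finset.sum_range_succ, hom3, hom2]
  ring

lemma ctc_structure (f : ℂ → ℂ) (hf : IsCloseToConvex f) :
    ∃ (c : ℂ) (k h : ℂ → ℂ), ‖c‖ = 1 ∧ DifferentiableOn ℂ k (ball (0 : ℂ) 1) ∧ k 0 = 1 ∧
      (∀ z ∈ ball (0 : ℂ) 1, 1 / 2 ≤ (k z).re) ∧ DifferentiableOn ℂ h (ball (0 : ℂ) 1) ∧ h 0 = 1 ∧
      (∀ z ∈ ball (0 : ℂ) 1, 1 / 2 ≤ (h z).re) ∧
      ∀ z ∈ ball (0 : ℂ) 1, deriv f z = (((1 + c) * k z + (-c)) * h z) * h z := by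
  obtain ⟨hfd, hf0, hf1, θ, g, hg, hpos⟩ := hf
  obtain ⟨h, hhd, hh0, hhre, hhne, hgh⟩ := starlike_sqrt g hg
  set p : ℂ → ℂ := fun z => deriv f z / (h z * h z) with hp
  have hpd : DifferentiableOn ℂ p (ball (0 : ℂ) 1) :=
    (hfd.deriv isOpen_ball).div (hhd.mul hhd) (fun z hz => mul_ne_zero (hhne z hz) (hhne z hz))
  have hp0 : p 0 = 1 := by simp [hp, hf1, hh0]
  set e : ℂ := Complex.exp (θ * Complex.I) with he
  have hppos : ∀ z ∈ ball (0 : ℂ) 1, z ≠ 0 → 0 < (e * p z).re := by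
    intro z hz hz0
    have := hpos z ⟨hz, hz0⟩
    rw [hgh z hz] at this
    convert this using 2
    have := hhne z hz
    simp only [hp]
    field_simp
  have here : e.re = Real.cos θ := by rw [he, Complex.exp_ofReal_mul_I_re]
  have heim : e.im = Real.sin θ := by rw [he, Complex.exp_ofReal_mul_I_im]
  have hcos : 0 < Real.cos θ := by
    by_contra! hc
    have hE : DifferentiableOn ℂ (fun z => Complex.exp (-(e * p z))) (ball (0 : ℂ) 1) :=
      ((hpd.const_mul e).neg).cexp
    have hmax : IsMaxOn (norm ∘ fun z => Complex.exp (-(e * p z))) (ball (0 : ℂ) 1) 0 := by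
      intro z hz
      simp only [Function.comp, Set.mem_ofPred_eq, Complex.norm_exp, Complex.neg_re,
        Real.exp_le_exp, neg_le_neg_iff]
      by_cases hz0 : z = 0
      · rw [hz0]
      · have := hppos z hz hz0
        rw [hp0, mul_one, here]
        linarith
    have := Complex.norm_eqOn_of_isPreconnected_of_isMaxOn (convex_ball (0 : ℂ) 1).isPreconnected
      isOpen_ball hE (mem_ball_self one_pos) hmax
    have hz : (1 / 2 : ℂ) ∈ ball (0 : ℂ) 1 := by
      simp; norm_num
    have h2 := this hz
    have h3 := hppos _ hz (by norm_num)
    simp only [Function.comp, Function.const, Complex.norm_exp, Complex.neg_re,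
        Real.exp_eq_exp, neg_inj, hp0, mul_one, here] at h2
    linarith
  have hsc : Real.cos θ ^ 2 + Real.sin θ ^ 2 = 1 := Real.cos_sq_add_sin_sq θ
  have heC : e = (Real.cos θ : ℂ) + (Real.sin θ : ℂ) * I := by
    apply Complex.ext <;> simp [here, heim, -Complex.ofReal_cos, -Complex.ofReal_sin]
  have hscC : (Real.cos θ : ℂ) ^ 2 + (Real.sin θ : ℂ) ^ 2 = 1 := by exact_mod_cast hsc
  have hcC : (Real.cos θ : ℂ) ≠ 0 := by exact_mod_cast hcos.ne'
  generalize Real.cos θ = C at *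
  generalize Real.sin θ = S at *
  refine ⟨((C : ℂ) - S * I) ^ 2, fun z => e / (2 * C) * p z + (1 / 2 - S * I / (2 * C)), h, ?_,
    (hpd.const_mul _).add_const _, ?_, ?_, hhd, hh0, hhre, ?_⟩
  · have : ‖(C : ℂ) - S * I‖ ^ 2 = 1 := by
      rw [← Complex.normSq_eq_norm_sq, Complex.normSq_apply]
      simp
      linarith
    rw [norm_pow, this]
  · simp only [hp0, heC]
    field_simp
    ring
  · intro z hz
    have hnn : 0 ≤ (e * p z).re := by
      by_cases hz0 : z = 0
      · rw [hz0, hp0, mul_one, here]; exact hcos.le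
      · exact (hppos z hz hz0).le
    have e1 : e / (2 * C) * p z + (1 / 2 - S * I / (2 * C))
        = ((1 / (2 * C) : ℝ) : ℂ) * (e * p z) + ((1 / 2 : ℝ) : ℂ) - ((S / (2 * C) : ℝ) : ℂ) * I := by
      push_cast
      field_simp
      ring
    show 1 / 2 ≤ (e / (2 * C) * p z + (1 / 2 - S * I / (2 * C))).re
    rw [e1, Complex.sub_re, Complex.add_re, Complex.re_ofReal_mul, Complex.re_ofReal_mul,
      Complex.ofReal_re, Complex.I_re]
    have : 0 ≤ 1 / (2 * C) * (e * p z).re := by positivity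
    linarith
  · intro z hz
    have h1 := hhne z hz
    have h2 : deriv f z = p z * h z * h z := by
      simp only [hp]; field_simp
    rw [h2]
    congr 2
    have hI : I ^ 2 = -1 := Complex.I_sq
    have e1 : 1 + ((C : ℂ) - S * I) ^ 2 = 2 * C * (C - S * I) := by
      linear_combination (-1) * hscC + (S : ℂ) ^ 2 * hI
    have e2 : ((C : ℂ) - S * I) * e = 1 := by
      rw [heC]; linear_combination hscC - (S : ℂ) ^ 2 * hI
    have e3 : (1 + ((C : ℂ) - S * I) ^ 2) * (e / (2 * C) * p z + (1 / 2 - S * I / (2 * C)))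
        = (((C : ℂ) - S * I) * e) * p z + (C - S * I) * (C - S * I) := by
      rw [e1]; field_simp
    rw [e3, e2]
    ring

lemma coeff_formula (f : ℂ → ℂ) (hf : IsCloseToConvex f) :
    ∃ (c : ℂ) (K H : ℕ → ℂ), ‖c‖ = 1 ∧ HullSeq K ∧ HullSeq H ∧
      4 * taylorCoeff f 4 = conv (conv (epsSeq c K) H) H 3 ∧
      7 * taylorCoeff f 7 = conv (conv (epsSeq c K) H) H 6 := by
  obtain ⟨c, k, h, hc, hkd, hk0, hkre, hhd, hh0, hhre, hfk⟩ := ctc_structure f hf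
  refine ⟨c, taylorCoeff k, taylorCoeff h, hc, hullSeq_of_half k hkd hk0 hkre,
    hullSeq_of_half h hhd hh0 hhre, ?_⟩
  have hud : DifferentiableOn ℂ (fun z => (1 + c) * k z + (-c)) (ball (0 : ℂ) 1) :=
    (hkd.const_mul _).add_const _
  have hu : taylorCoeff (fun z => (1 + c) * k z + (-c)) = epsSeq c (taylorCoeff k) := by
    funext n
    unfold epsSeq
    split_ifs with hn
    · subst hn
      simp [taylorCoeff, hk0]
    · exact taylorCoeff_affine k _ _ n hn
  have hD : ∀ n, taylorCoeff (deriv f) n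
      = conv (conv (epsSeq c (taylorCoeff k)) (taylorCoeff h)) (taylorCoeff h) n := by
    intro n
    have hev : deriv f =ᶠ[nhds 0] fun z => (((1 + c) * k z + (-c)) * h z) * h z :=
      Filter.eventuallyEq_of_mem (ball_mem_nhds 0 one_pos) hfk
    have h1 : taylorCoeff (deriv f) n
        = taylorCoeff (fun z => (((1 + c) * k z + (-c)) * h z) * h z) n := by
      unfold taylorCoeff
      rw [hev.iteratedDeriv_eq n]
    rw [h1, taylorCoeff_mul (fun z => ((1 + c) * k z + (-c)) * h z) h (hud.mul hhd) hhd,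
      taylorCoeff_mul (fun z => (1 + c) * k z + (-c)) h hud hhd, hu]
  constructor
  · rw [← hD 3, taylorCoeff_deriv]; norm_num
  · rw [← hD 6, taylorCoeff_deriv]; norm_num

lemma rotated_bound (lam t : ℝ) (hlam : 0 < lam) (ht : 0 < t) (hC : 0 < 2 - 3 * lam * t)
    (hdisc : 9 * lam * (t + 1) ^ 2 = 32 - 16 * lam)
    (f : ℂ → ℂ) (hf : IsCloseToConvex f) (e : ℂ) (he : ‖e‖ = 1) :
    ((lam : ℂ) * (e ^ 3 * taylorCoeff f 4) ^ 2 - e ^ 6 * taylorCoeff f 7).re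
      ≤ 4 + 3 / 2 * (t + 1 / t) := by
  obtain ⟨c, K, H, hc, hK, hH, h4, h7⟩ := coeff_formula f hf
  set r : ℝ := (e ^ 3 * taylorCoeff f 4).re with hr
  have key := trilinear K H c ((2 * lam * r : ℝ) * e ^ 3 / 4) (-e ^ 6 / 7)
    (lam * r ^ 2 + (4 + 3 / 2 * (t + 1 / t))) hK hH (by
      intro w y1 y2 hw h1 h2
      refine feynman _ _ _ _ _ ?_ w y1 y2 hw.le h1.le h2.le
      intro v hv
      have hfi := final_ineq lam t ht hC hdisc (e ^ 3 * v ^ 3) (-(e ^ 3 * (c * w) * v ^ 2))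
        (by
          rw [norm_mul, norm_pow, norm_pow, he, one_pow, one_mul]
          exact pow_le_one₀ (norm_nonneg v) hv)
        (by
          rw [norm_neg, norm_mul, norm_mul, norm_mul, norm_pow, norm_pow, he, hc, hw]
          simp [hv])
      set Z := (5 * (e ^ 3 * v ^ 3) - 3 * (-(e ^ 3 * (c * w) * v ^ 2))) / 2 with hZ
      have e1 : 6 * (((2 * lam * r : ℝ) : ℂ) * e ^ 3 / 4 * (c * w)) * v ^ 2
          + 10 * (((2 * lam * r : ℝ) : ℂ) * e ^ 3 / 4) * v ^ 3
          + 21 * (-e ^ 6 / 7 * (c * w)) * v ^ 5 + 28 * (-e ^ 6 / 7) * v ^ 6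
          = ((2 * lam * r : ℝ) : ℂ) * Z - (4 * (e ^ 3 * v ^ 3) ^ 2
            - 3 * (e ^ 3 * v ^ 3) * (-(e ^ 3 * (c * w) * v ^ 2))) := by
        rw [hZ]; ring
      rw [e1, Complex.sub_re, Complex.re_ofReal_mul]
      nlinarith [mul_nonneg hlam.le (sq_nonneg (r - Z.re))])
  rw [← h4, ← h7] at key
  have e2 : ((2 * lam * r : ℝ) : ℂ) * e ^ 3 / 4 * (4 * taylorCoeff f 4)
      + -e ^ 6 / 7 * (7 * taylorCoeff f 7)
      = ((2 * lam * r : ℝ) : ℂ) * (e ^ 3 * taylorCoeff f 4) - e ^ 6 * taylorCoeff f 7 := by ring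
  rw [e2, Complex.sub_re, Complex.re_ofReal_mul, ← hr] at key
  have e3 : ((e ^ 3 * taylorCoeff f 4) ^ 2).re ≤ r ^ 2 := by
    rw [pow_two, Complex.mul_re, ← hr]
    nlinarith [sq_nonneg (e ^ 3 * taylorCoeff f 4).im]
  rw [Complex.sub_re, Complex.re_ofReal_mul]
  nlinarith [mul_le_mul_of_nonneg_left e3 hlam.le]

theorem generalized_zalcman_closeToConvex_n4_middle_lambda
    (lam : ℝ) (hlam1 : 8 / 13 < lam) (hlam2 : lam < 1)
    (f : ℂ → ℂ) (hf : IsCloseToConvex f) :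
    ‖(lam : ℂ) * (taylorCoeff f 4) ^ 2 - taylorCoeff f 7‖ ≤
      (lam * (80 - 49 * lam) + 32 * (2 - lam) * Real.sqrt (lam * (2 - lam)))
        / (lam * (32 - 25 * lam)) := by
  have hl : 0 < lam := by linarith
  set S := Real.sqrt (lam * (2 - lam)) with hS
  have hS2 : S ^ 2 = lam * (2 - lam) := Real.sq_sqrt (by nlinarith)
  have hS0 : 0 ≤ S := Real.sqrt_nonneg _
  have h3 : 3 * lam < 4 * S := by nlinarith
  have h4 : 4 * S < 2 + 3 * lam := by
    have : 0 < (5 * lam - 2) ^ 2 := by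
      have : 0 < 5 * lam - 2 := by linarith
      positivity
    nlinarith
  obtain ⟨t, htS⟩ : ∃ t : ℝ, 3 * lam * (t + 1) = 4 * S :=
    ⟨4 * S / (3 * lam) - 1, by field_simp; ring⟩
  have ht : 0 < t := by
    by_contra! h
    nlinarith
  have hC : 0 < 2 - 3 * lam * t := by linarith
  have hdisc : 9 * lam * (t + 1) ^ 2 = 32 - 16 * lam := by
    have : lam * (9 * lam * (t + 1) ^ 2) = lam * (32 - 16 * lam) := by
      have : (3 * lam * (t + 1)) ^ 2 = 16 * (lam * (2 - lam)) := by rw [htS, ← hS2]; ring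
      linear_combination this
    exact mul_left_cancel₀ hl.ne' this
  have hval : (lam * (80 - 49 * lam) + 32 * (2 - lam) * S) / (lam * (32 - 25 * lam))
      = 4 + 3 / 2 * (t + 1 / t) := by
    have hd : 9 * lam * (t * (t + 2)) = 32 - 25 * lam := by linear_combination hdisc
    have hSt : S = 3 * lam * (t + 1) / 4 := by linarith
    have hden : (32 - 25 * lam) ≠ 0 := by linarith
    rw [div_eq_iff (by positivity)]
    have h1t : 1 / t * (32 - 25 * lam) = 9 * lam * (t + 2) := by
      rw [← hd]; field_simp
    rw [hSt]
    linear_combination (-3 / 2 * lam) * h1t + 0 * hd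
  rw [hval]
  set W : ℂ := (lam : ℂ) * (taylorCoeff f 4) ^ 2 - taylorCoeff f 7 with hW
  set e : ℂ := Complex.exp ((-(Complex.arg W / 6) : ℝ) * I) with he
  have hen : ‖e‖ = 1 := by rw [he, Complex.norm_exp_ofReal_mul_I]
  have := rotated_bound lam t hl ht hC hdisc f hf e hen
  have e1 : (lam : ℂ) * (e ^ 3 * taylorCoeff f 4) ^ 2 - e ^ 6 * taylorCoeff f 7 = (‖W‖ : ℂ) := by
    have h6 : e ^ 6 = Complex.exp (-(Complex.arg W * I)) := by
      rw [he, ← Complex.exp_nat_mul]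
      congr 1
      push_cast
      ring
    have h7 : e ^ 6 * W = (‖W‖ : ℂ) := by
      conv_lhs => rw [← Complex.norm_mul_exp_arg_mul_I W]
      rw [h6]
      rw [mul_left_comm, ← Complex.exp_add]
      simp
    rw [← h7, hW]
    ring
  rw [e1, Complex.ofReal_re] at this
  exact this
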